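/- arXiv:quant-ph/0611070 — 7 statements merged into one kernel-verified Lean document; each statement's English description precedes it below -/
import Mathlib

section
/- (Li–Tam) Let d = 2 or d = 3. A d×d correlation matrix ξ is an extreme point of the convex set of d×d correlation matrices if and only if ξ has rank one. -/
open Matrix
open scoped ComplexOrder

/-! The bridge is the condition that every entry of `ξ` is unimodular. For a correlation matrix
(of any size) this is equivalent to rank one: a `2 × 2` principal minor is `1 - |ξ i j|²`, and
conversely if `r` is a row of `ξ`, then `ξ - rᴴ r` is positive semidefinite by Cauchy–Schwarz
(`norm_sq_mulVec_le`) and has zero diagonal, hence vanishes.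

Unimodular entries force extremality, since entries of correlation matrices lie in the closed unit
disc, whose boundary points are extreme (`mem_extremePoints_of_norm_eq_one`).

Conversely, suppose `|ξ i j| < 1`. The rows `r`, `p` of index `i`, `j` are linearly independent,
and the Hermitian forms in the two functionals `r`, `p` make up a real four-dimensional space of
matrices (`pairForm`). Each of them is bounded by a multiple of `ξ`, again by Cauchy–Schwarz.
Since `d < 4`, a nonzero one `Δ` has zero diagonal, and then `ξ ± ε Δ` are correlation
matrices with midpoint `ξ` for small `ε`, so `ξ` is not extreme. -/

section

variable {n : Type*} [Fintype n]

/-- Cauchy–Schwarz for the form defined by `ξ`, applied to `x` and a standard basis vector of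
norm one. -/
lemma norm_sq_mulVec_le {ξ : Matrix n n ℂ} (hpsd : ξ.PosSemidef) {i : n} (hi : ξ i i = 1)
    (x : n → ℂ) : ‖ξ i ⬝ᵥ x‖ ^ 2 ≤ (star x ⬝ᵥ (ξ *ᵥ x)).re := by
  classical
  set s := ξ i ⬝ᵥ x with hs
  -- Evaluate the form on the component of `x` that is `ξ`-orthogonal to the `i`-th basis vector.
  have h := hpsd.dotProduct_mulVec_nonneg (x - s • Pi.single i 1)
  have h1 : star x ⬝ᵥ (ξ *ᵥ Pi.single i 1) = star s := by
    rw [hs, star_dotProduct, dotProduct_comm]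
    simp only [mulVec_single_one, dotProduct, Pi.star_apply, star_sum, star_mul']
    refine Finset.sum_congr rfl fun k _ => ?_
    simp [hpsd.1.apply i k, mul_comm]
  have h2 : Pi.single i 1 ⬝ᵥ (ξ *ᵥ x) = s := by
    rw [single_one_dotProduct]; rfl
  have h3 : Pi.single i 1 ⬝ᵥ (ξ *ᵥ Pi.single i 1) = 1 := by
    rw [single_one_dotProduct]; simp [hi]
  have h4 : star (x - s • Pi.single i 1) ⬝ᵥ (ξ *ᵥ (x - s • Pi.single i 1))
      = star x ⬝ᵥ (ξ *ᵥ x) - s * star s := by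
    have h5 : star (Pi.single i 1 : n → ℂ) = Pi.single i 1 := by
      simp
    simp only [star_sub, star_smul, mulVec_sub, mulVec_smul, sub_dotProduct, dotProduct_sub,
      smul_dotProduct, dotProduct_smul, h1, h2, h3, h5, smul_eq_mul]
    ring
  rw [h4] at h
  have h6 : s * star s = ((‖s‖ ^ 2 : ℝ) : ℂ) := by
    rw [Complex.star_def, Complex.mul_conj, Complex.normSq_eq_norm_sq]
  rw [h6] at h
  have := (Complex.le_def.1 h).1
  simp only [Complex.sub_re, Complex.ofReal_re, Complex.zero_re] at this
  linarith

lemma norm_apply_le_one {ξ : Matrix n n ℂ} (hpsd : ξ.PosSemidef) (hdiag : ∀ k, ξ k k = 1)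
    (i j : n) : ‖ξ i j‖ ≤ 1 := by
  classical
  have h := norm_sq_mulVec_le hpsd (hdiag i) (Pi.single j 1)
  have h5 : star (Pi.single j 1 : n → ℂ) = Pi.single j 1 := by simp
  rw [h5, single_one_dotProduct, dotProduct_single_one] at h
  simp [hdiag] at h
  exact h

omit [Fintype n] in
lemma minor_ne_zero {ξ : Matrix n n ℂ} (hpsd : ξ.PosSemidef) (hdiag : ∀ k, ξ k k = 1)
    {i j : n} (hne : ‖ξ i j‖ ≠ 1) : ξ i i * ξ j j - ξ i j * ξ j i ≠ 0 := by
  rw [hdiag, hdiag, ← hpsd.1.apply j i, Complex.star_def, Complex.mul_conj,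
    Complex.normSq_eq_norm_sq]
  intro h
  have h' : (1 : ℝ) - ‖ξ i j‖ ^ 2 = 0 := by
    rw [one_mul] at h
    exact_mod_cast h
  exact hne ((sq_eq_sq₀ (norm_nonneg _) zero_le_one).1 (by linarith))

lemma norm_eq_one_of_rank_eq_one {ξ : Matrix n n ℂ} (hpsd : ξ.PosSemidef)
    (hdiag : ∀ k, ξ k k = 1) (hr : ξ.rank = 1) (i j : n) : ‖ξ i j‖ = 1 := by
  by_contra hne
  have hdet : (ξ.submatrix ![i, j] ![i, j]).det ≠ 0 := by
    rw [det_fin_two]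
    exact minor_ne_zero hpsd hdiag hne
  have h1 := rank_of_det_ne_zero hdet
  have h2 := rank_submatrix_le ξ ![i, j] ![i, j]
  rw [h1, hr] at h2
  simp at h2

lemma rank_eq_one_of_norm_eq_one {ξ : Matrix n n ℂ} (hpsd : ξ.PosSemidef)
    (hdiag : ∀ k, ξ k k = 1) (i : n) (h : ∀ k, ‖ξ i k‖ = 1) : ξ.rank = 1 := by
  have hP : (ξ - vecMulVec (star (ξ i)) (ξ i)).PosSemidef := by
    refine .of_dotProduct_mulVec_nonneg
      (hpsd.1.sub (by ext; simp [vecMulVec_apply, conjTranspose_apply, mul_comm])) fun x => ?_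
    have h1 : star x ⬝ᵥ ((ξ - vecMulVec (star (ξ i)) (ξ i)) *ᵥ x)
        = star x ⬝ᵥ (ξ *ᵥ x) - ((‖ξ i ⬝ᵥ x‖ ^ 2 : ℝ) : ℂ) := by
      have h2 : star x ⬝ᵥ star (ξ i) = star (ξ i ⬝ᵥ x) := by
        rw [star_dotProduct_star, dotProduct_comm]
      rw [sub_mulVec, dotProduct_sub, vecMulVec_mulVec, op_smul_eq_smul, dotProduct_smul, h2,
        ← Complex.normSq_eq_norm_sq, ← Complex.mul_conj, smul_eq_mul, Complex.star_def]
    rw [h1, sub_nonneg, Complex.le_def]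
    rw [Complex.ofReal_re, Complex.ofReal_im]
    exact ⟨norm_sq_mulVec_le hpsd (hdiag i) x, (hpsd.1.im_star_dotProduct_mulVec_self x).symm⟩
  have h0 : ξ - vecMulVec (star (ξ i)) (ξ i) = 0 := by
    rw [← hP.trace_eq_zero_iff]
    refine Finset.sum_eq_zero fun k _ => ?_
    have h1 : star (ξ i k) * ξ i k = 1 := by
      rw [mul_comm, Complex.star_def, Complex.mul_conj, Complex.normSq_eq_norm_sq, h]
      simp
    rw [diag_apply, Matrix.sub_apply, vecMulVec_apply, hdiag, Pi.star_apply, h1, sub_self]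
  apply le_antisymm
  · rw [sub_eq_zero.1 h0]
    exact rank_vecMulVec_le _ _
  · by_contra hlt
    have hz : (ξ.submatrix ![i] ![i]).det ≠ 0 := by
      rw [det_fin_one]
      simp [hdiag]
    have h1 := rank_of_det_ne_zero hz
    have h2 := rank_submatrix_le ξ ![i] ![i]
    rw [h1] at h2
    simp at h2
    omega

lemma mem_extremePoints_of_norm_eq_one {ξ : Matrix n n ℂ} (hpsd : ξ.PosSemidef)
    (hdiag : ∀ k, ξ k k = 1) (h : ∀ i j, ‖ξ i j‖ = 1) :
    ξ ∈ Set.extremePoints ℝ {η : Matrix n n ℂ | η.PosSemidef ∧ ∀ k, η k k = 1} := by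
  rw [mem_extremePoints_iff_left]
  refine ⟨⟨hpsd, hdiag⟩, ?_⟩
  rintro A ⟨hA, hA'⟩ B ⟨hB, hB'⟩ ⟨a, b, ha, hb, hab, rfl⟩
  ext i j
  have hext := StrictConvexSpace.sphere_subset_extremePoints_closedBall (0 : ℂ) one_ne_zero
    (show (a • A + b • B) i j ∈ Metric.sphere (0 : ℂ) 1 by simpa using h i j)
  rw [mem_extremePoints_iff_left] at hext
  exact hext.2 _ (by simpa using norm_apply_le_one hA hA' i j) _
    (by simpa using norm_apply_le_one hB hB' i j) ⟨a, b, ha, hb, hab, rfl⟩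

/-- A Hermitian direction with zero diagonal whose form is bounded by a multiple of `ξ` must
vanish when `ξ` is extreme. -/
lemma eq_zero_of_mem_extremePoints {ξ D : Matrix n n ℂ}
    (hξ : ξ ∈ Set.extremePoints ℝ {η : Matrix n n ℂ | η.PosSemidef ∧ ∀ k, η k k = 1})
    (hD : D.IsHermitian) (hD0 : ∀ k, D k k = 0) {C : ℝ} (hC : 0 ≤ C)
    (hle : ∀ x, |(star x ⬝ᵥ (D *ᵥ x)).re| ≤ C * (star x ⬝ᵥ (ξ *ᵥ x)).re) : D = 0 := by
  obtain ⟨⟨hpsd, hdiag⟩, hext⟩ := mem_extremePoints_iff_left.1 hξ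
  have key : ∀ t : ℝ, |t| * C ≤ 1 →
      ξ + t • D ∈ {η : Matrix n n ℂ | η.PosSemidef ∧ ∀ k, η k k = 1} := by
    intro t ht
    have hH : (ξ + t • D).IsHermitian := hpsd.1.add (hD.smul (IsSelfAdjoint.all t))
    refine ⟨.of_dotProduct_mulVec_nonneg hH fun x => ?_, fun k => by simp [hdiag, hD0]⟩
    rw [Complex.le_def]
    refine ⟨?_, by simpa using (hH.im_star_dotProduct_mulVec_self x).symm⟩
    have h0 : 0 ≤ (star x ⬝ᵥ (ξ *ᵥ x)).re := (Complex.le_def.1 (hpsd.dotProduct_mulVec_nonneg x)).1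
    have h1 : |t * (star x ⬝ᵥ (D *ᵥ x)).re| ≤ (star x ⬝ᵥ (ξ *ᵥ x)).re := by
      rw [abs_mul]
      calc _ ≤ |t| * (C * (star x ⬝ᵥ (ξ *ᵥ x)).re) :=
            mul_le_mul_of_nonneg_left (hle x) (abs_nonneg t)
        _ = (|t| * C) * (star x ⬝ᵥ (ξ *ᵥ x)).re := by ring
        _ ≤ _ := mul_le_of_le_one_left h0 ht
    rw [add_mulVec, dotProduct_add, smul_mulVec, dotProduct_smul, Complex.add_re,
      Complex.smul_re, smul_eq_mul, Complex.zero_re]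
    linarith [neg_le_of_abs_le h1]
  set t : ℝ := (C + 1)⁻¹ with ht
  have htpos : 0 < t := by positivity
  have htC : |t| * C ≤ 1 := by
    rw [abs_of_pos htpos, ht, inv_mul_le_iff₀ (by positivity)]; linarith
  have h := hext _ (key t htC) _ (key (-t) (by rwa [abs_neg]))
    ⟨1 / 2, 1 / 2, by norm_num, by norm_num, by norm_num, by module⟩
  have h' : t • D = 0 := by simpa using h
  exact (smul_eq_zero.1 h').resolve_left (ne_of_gt htpos)

/-- The matrix of the Hermitian form `a |r x|² + b |p x|² + 2 Re (z (r x)⁻ (p x))` in the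
functionals `x ↦ r ⬝ᵥ x` and `x ↦ p ⬝ᵥ x`, where `⁻` is complex conjugation. -/
def pairForm (r p : n → ℂ) (a b : ℝ) (z : ℂ) : Matrix n n ℂ :=
  Matrix.of fun k l => a * (star (r k) * r l) + b * (star (p k) * p l)
    + z * (star (r k) * p l) + star z * (star (p k) * r l)

omit [Fintype n] in
lemma pairForm_isHermitian (r p : n → ℂ) (a b : ℝ) (z : ℂ) :
    (pairForm r p a b z).IsHermitian := by
  ext k l
  simp [pairForm, conjTranspose_apply]
  ring

lemma pairForm_dotProduct (r p : n → ℂ) (a b : ℝ) (z : ℂ) (x : n → ℂ) :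
    star x ⬝ᵥ (pairForm r p a b z *ᵥ x) =
      a * (star (r ⬝ᵥ x) * (r ⬝ᵥ x)) + b * (star (p ⬝ᵥ x) * (p ⬝ᵥ x))
        + z * (star (r ⬝ᵥ x) * (p ⬝ᵥ x)) + star z * (star (p ⬝ᵥ x) * (r ⬝ᵥ x)) := by
  have hexp : ∀ u v : n → ℂ, star (u ⬝ᵥ x) * (v ⬝ᵥ x)
      = ∑ k, ∑ l, star (u k) * star (x k) * (v l * x l) := fun u v => by
    simp only [dotProduct, star_sum, star_mul', Finset.sum_mul_sum]
  simp only [hexp, Finset.mul_sum, ← Finset.sum_add_distrib]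
  simp only [dotProduct, mulVec, pairForm, Matrix.of_apply, Pi.star_apply, Finset.mul_sum]
  refine Finset.sum_congr rfl fun k _ => Finset.sum_congr rfl fun l _ => ?_
  ring

lemma abs_re_pairForm_le (r p : n → ℂ) (a b : ℝ) (z : ℂ) (x : n → ℂ) {q : ℝ}
    (hr : ‖r ⬝ᵥ x‖ ^ 2 ≤ q) (hp : ‖p ⬝ᵥ x‖ ^ 2 ≤ q) :
    |(star x ⬝ᵥ (pairForm r p a b z *ᵥ x)).re| ≤ (|a| + |b| + 2 * ‖z‖) * q := by
  rw [pairForm_dotProduct]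
  refine (Complex.abs_re_le_norm _).trans ?_
  set s := r ⬝ᵥ x
  set t := p ⬝ᵥ x
  have hst : ‖s‖ * ‖t‖ ≤ q := by nlinarith [sq_nonneg (‖s‖ - ‖t‖)]
  calc _ ≤ ‖(a : ℂ) * (star s * s)‖ + ‖(b : ℂ) * (star t * t)‖ + ‖z * (star s * t)‖
        + ‖star z * (star t * s)‖ := norm_add₄_le
    _ = |a| * ‖s‖ ^ 2 + |b| * ‖t‖ ^ 2 + 2 * ‖z‖ * (‖s‖ * ‖t‖) := by
      simp only [norm_mul, norm_star, Complex.norm_real, Real.norm_eq_abs]; ring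
    _ ≤ |a| * q + |b| * q + 2 * ‖z‖ * q := by gcongr
    _ = _ := by ring

omit [Fintype n] in
/-- The forms in two functionals whose restriction to the coordinates `i`, `j` has nonzero
determinant are independent. -/
lemma pairForm_eq_zero {r p : n → ℂ} {a b : ℝ} {z : ℂ} {i j : n}
    (hdet : r i * p j - r j * p i ≠ 0) (h : pairForm r p a b z = 0) :
    a = 0 ∧ b = 0 ∧ z = 0 := by
  set e := r i * p j - r j * p i with he
  have hs : star e = star (r i) * star (p j) - star (r j) * star (p i) := by simp [he]
  have hse : star e ≠ 0 := by simpa using hdet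
  have hii := congr_fun₂ h i i
  have hij := congr_fun₂ h i j
  have hji := congr_fun₂ h j i
  have hjj := congr_fun₂ h j j
  simp only [pairForm, Matrix.of_apply, Matrix.zero_apply] at hii hij hji hjj
  -- Cramer's rule on both sides of the relation `Nᴴ H N = 0`, where `det N = e`.
  have ha : star e * e * (a : ℂ) = 0 := by
    rw [hs, he]
    linear_combination star (p j) * p j * hii - star (p j) * p i * hij - star (p i) * p j * hji
      + star (p i) * p i * hjj
  have hb : star e * e * (b : ℂ) = 0 := by
    rw [hs, he]
    linear_combination star (r j) * r j * hii - star (r j) * r i * hij - star (r i) * r j * hji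
      + star (r i) * r i * hjj
  have hz : star e * e * z = 0 := by
    rw [hs, he]
    linear_combination -(star (p j) * r j * hii) + star (p j) * r i * hij
      + star (p i) * r j * hji - star (p i) * r i * hjj
  have hne : star e * e ≠ 0 := mul_ne_zero hse hdet
  exact ⟨by exact_mod_cast (mul_eq_zero.1 ha).resolve_left hne,
    by exact_mod_cast (mul_eq_zero.1 hb).resolve_left hne, (mul_eq_zero.1 hz).resolve_left hne⟩

/-- Fewer than four real linear conditions cannot kill the four real parameters of `pairForm`. -/
lemma exists_pairForm_diag_eq_zero (hn : Fintype.card n < 4) (r p : n → ℂ) :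
    ∃ (a b : ℝ) (z : ℂ), ¬ (a = 0 ∧ b = 0 ∧ z = 0) ∧ ∀ k, pairForm r p a b z k k = 0 := by
  let f : (ℝ × ℝ × ℂ) →ₗ[ℝ] (n → ℝ) :=
    { toFun := fun v k => (pairForm r p v.1 v.2.1 v.2.2 k k).re
      map_add' := by
        intro v w
        ext k
        simp [pairForm]
        ring
      map_smul' := by
        intro c v
        ext k
        simp [pairForm]
        ring }
  have hk : LinearMap.ker f ≠ ⊥ := by
    apply LinearMap.ker_ne_bot_of_finrank_lt
    simp [Complex.finrank_real_complex]
    omega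
  obtain ⟨⟨a, b, z⟩, hv, hv0⟩ := (Submodule.ne_bot_iff _).1 hk
  refine ⟨a, b, z, by simpa using hv0, fun k => ?_⟩
  have h1 : (pairForm r p a b z k k).re = 0 := congr_fun (LinearMap.mem_ker.1 hv) k
  have h2 := (pairForm_isHermitian r p a b z).coe_re_apply_self k
  rw [← h2]
  simp [h1]

lemma norm_eq_one_of_mem_extremePoints (hn : Fintype.card n < 4) {ξ : Matrix n n ℂ}
    (hξ : ξ ∈ Set.extremePoints ℝ {η : Matrix n n ℂ | η.PosSemidef ∧ ∀ k, η k k = 1})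
    (i j : n) : ‖ξ i j‖ = 1 := by
  obtain ⟨hpsd, hdiag⟩ := hξ.1
  by_contra hne
  have hdet := minor_ne_zero hpsd hdiag hne
  obtain ⟨a, b, z, hv, hk⟩ := exists_pairForm_diag_eq_zero hn (ξ i) (ξ j)
  refine hv (pairForm_eq_zero hdet (eq_zero_of_mem_extremePoints hξ
    (pairForm_isHermitian _ _ a b z) hk (C := |a| + |b| + 2 * ‖z‖) (by positivity) fun x => ?_))
  exact abs_re_pairForm_le _ _ a b z x (norm_sq_mulVec_le hpsd (hdiag i) x)
    (norm_sq_mulVec_le hpsd (hdiag j) x)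

end

/-- **Li–Tam.** For `d = 2` or `d = 3`, a `d × d` correlation matrix is an
extreme point of the convex set of correlation matrices if and only if it has rank one. -/
theorem liTam_extreme_correlation_iff_rank_one
    (d : ℕ) (hd : d = 2 ∨ d = 3) (ξ : Matrix (Fin d) (Fin d) ℂ)
    (hpsd : ξ.PosSemidef) (hdiag : ∀ k, ξ k k = 1) :
    ξ ∈ Set.extremePoints ℝ
        {η : Matrix (Fin d) (Fin d) ℂ | η.PosSemidef ∧ ∀ k, η k k = 1} ↔
      ξ.rank = 1 := by
  constructor
  · intro h
    have hcard : Fintype.card (Fin d) < 4 := by rw [Fintype.card_fin]; omega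
    exact rank_eq_one_of_norm_eq_one hpsd hdiag ⟨0, by omega⟩
      fun k => norm_eq_one_of_mem_extremePoints hcard h _ k
  · intro h
    exact mem_extremePoints_of_norm_eq_one hpsd hdiag
      fun i j => norm_eq_one_of_rank_eq_one hpsd hdiag h i j
end

section
/- Let d = 2 or d = 3 and let ξ be a d×d correlation matrix. Then the Schur multiplier map E(ρ) = ξ ∘ ρ is random-unitary: there exist finitely many diagonal unitary d×d matrices U_1, …, U_m and a probability distribution p_1, …, p_m (p_i ≥ 0, Σ_i p_i = 1) such that ξ ∘ ρ = Σ_i p_i U_i ρ U_i† for every d×d matrix ρ. Equivalently, ξ is a convex combination of rank-one correlation matrices. -/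
open Matrix
open scoped ComplexOrder

/-!
A `3 × 3` correlation matrix is determined by `a = ξ₁₀`, `b = ξ₂₀`, `c = ξ₁₂`, and positivity
of its principal minors says `|a|, |b| ≤ 1` and `|c - a b̄|² ≤ (1 - |a|²)(1 - |b|²)`. Rank-one
correlation matrices correspond to the triples `(x, y, x ȳ)` with `x`, `y` of modulus one, so it
suffices to put `(a, b, c)` in the convex hull of these triples.

For fixed `a`, `b` the admissible `c` form a disc, and every point of a disc is a convex
combination of two boundary points; hence `c = a b̄ + s t w̄` with `s² = 1 - |a|²`,
`t² = 1 - |b|²`, `|w| = 1` may be assumed (rank at most two, `mem_phaseHull_of_boundary`).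
Then `(a + s z, b + t w z, ·)` averages to `(a, b, c)` for any random `z` with `E z = 0` and
`E |z|² = 1`. A two-valued `z`, taking the values `x e` and `-e / x` with `x > 0`, `|e| = 1`, has
these moments for suitable weights, and `x`, `e` can be chosen so that `a + s z` and `b + t w z`
always have modulus one: this amounts to `Re (ā e) / s = Re (b̄ w e) / t = (1 - x²) / (2 x)`, where
the first equality is one real-linear condition on the direction `e` and the second is solved for
`x`. Geometrically, three points of the Bloch sphere lie on a circle, and the values of `z` are,
up to conjugation, the stereographic coordinates of the two poles of that circle. The case `d = 2` is the case `b = c = 0`.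
-/

/-- The convex hull of the off-diagonal data `(x, y, x ȳ)` of the `3 × 3` rank-one correlation
matrices built from the phase vectors `(1, x, y)`. -/
def phaseHull : Set (ℂ × ℂ × ℂ) :=
  convexHull ℝ {q | ∃ x y : ℂ, ‖x‖ = 1 ∧ ‖y‖ = 1 ∧ q = (x, y, x * star y)}

lemma exists_unit_re_mul_eq_zero (δ : ℂ) : ∃ e : ℂ, ‖e‖ = 1 ∧ (δ * e).re = 0 := by
  by_cases h : δ = 0
  · exact ⟨1, by simp, by simp [h]⟩
  · have hn : (‖δ‖ : ℂ) ≠ 0 := by simpa using h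
    refine ⟨Complex.I * star δ / ‖δ‖, by simp [h], ?_⟩
    have : δ * (Complex.I * star δ / ‖δ‖) = Complex.I * ((‖δ‖ : ℝ) : ℂ) := by
      field_simp
      rw [Complex.star_def, Complex.mul_conj, Complex.normSq_eq_norm_sq]
      push_cast
      ring
    rw [this]
    simp

/-- A direction `e` along which `Re (ᾱ e) / s` and `Re (γ̄ e) / t` have a common value `y`; a
condition whose denominator vanishes is dropped. -/
lemma exists_direction (α γ : ℂ) (s t : ℝ) :
    ∃ (e : ℂ) (y : ℝ), ‖e‖ = 1 ∧ (s = 0 ∨ (star α * e).re = s * y) ∧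
      (t = 0 ∨ (star γ * e).re = t * y) := by
  by_cases hs : s = 0
  · by_cases ht : t = 0
    · exact ⟨1, 0, by simp, Or.inl hs, Or.inl ht⟩
    · exact ⟨1, (star γ * 1).re / t, by simp, Or.inl hs, Or.inr (by field_simp)⟩
  · obtain ⟨e, he, h⟩ := exists_unit_re_mul_eq_zero (t * star α - s * star γ)
    refine ⟨e, (star α * e).re / s, he, Or.inr (by field_simp), Or.inr ?_⟩
    have h2 : t * (star α * e).re - s * (star γ * e).re = 0 := by
      rw [← h]
      simp
      ring
    rw [mul_div_assoc', eq_div_iff hs]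
    linarith

lemma norm_add_real_mul_eq_one (α e : ℂ) (s k : ℝ) (he : ‖e‖ = 1) (hα : ‖α‖ ^ 2 + s ^ 2 = 1)
    (h : 2 * s * k * (star α * e).re + s ^ 2 * k ^ 2 = s ^ 2) :
    ‖α + s * (k * e)‖ = 1 := by
  have he2 : ‖e‖ ^ 2 = 1 := by rw [he]; norm_num
  have : ‖α + s * (k * e)‖ ^ 2 = 1 := by
    rw [← Complex.normSq_eq_norm_sq, Complex.normSq_apply] at *
    simp at h ⊢
    linear_combination hα + h + s ^ 2 * k ^ 2 * he2
  nlinarith [norm_nonneg (α + s * (k * e))]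

/-- The two values `x e` and `-e / x` of the random shift keep `α + s z` and `γ + t z` on the unit
circle simultaneously. -/
lemma exists_shift (α γ : ℂ) (s t : ℝ) (hα : ‖α‖ ^ 2 + s ^ 2 = 1) (hγ : ‖γ‖ ^ 2 + t ^ 2 = 1) :
    ∃ (e : ℂ) (x : ℝ), ‖e‖ = 1 ∧ 0 < x ∧
      ‖α + s * ((x : ℝ) * e)‖ = 1 ∧ ‖α + s * ((-x⁻¹ : ℝ) * e)‖ = 1 ∧
      ‖γ + t * ((x : ℝ) * e)‖ = 1 ∧ ‖γ + t * ((-x⁻¹ : ℝ) * e)‖ = 1 := by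
  obtain ⟨e, y, he, h1, h2⟩ := exists_direction α γ s t
  -- the positive root of `x² + 2 x y = 1`
  obtain ⟨x, hx, hxy⟩ : ∃ x : ℝ, 0 < x ∧ x ^ 2 + 2 * x * y = 1 := by
    have hsq : Real.sqrt (y ^ 2 + 1) ^ 2 = y ^ 2 + 1 := Real.sq_sqrt (by positivity)
    refine ⟨Real.sqrt (y ^ 2 + 1) - y, ?_, by linear_combination hsq⟩
    exact sub_pos.2 (Real.lt_sqrt_of_sq_lt (by linarith))
  have key : ∀ (a : ℂ) (r : ℝ), (r = 0 ∨ (star a * e).re = r * y) → ‖a‖ ^ 2 + r ^ 2 = 1 →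
      ‖a + r * ((x : ℝ) * e)‖ = 1 ∧ ‖a + r * ((-x⁻¹ : ℝ) * e)‖ = 1 := by
    intro a r h ha
    constructor <;> refine norm_add_real_mul_eq_one a e r _ he ha ?_
    · rcases h with h | h
      · simp [h]
      · rw [h]; linear_combination r ^ 2 * hxy
    · rcases h with h | h
      · simp [h]
      · rw [h]; field_simp; linear_combination (-r ^ 2) * hxy
  exact ⟨e, x, he, hx, (key α s h1 hα).1, (key α s h1 hα).2, (key γ t h2 hγ).1, (key γ t h2 hγ).2⟩

/-- Correlation matrices of rank at most two are mixtures of two rank-one correlation matrices. -/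
lemma mem_phaseHull_of_boundary (a b w : ℂ) (s t : ℝ) (ha : ‖a‖ ^ 2 + s ^ 2 = 1)
    (hb : ‖b‖ ^ 2 + t ^ 2 = 1) (hw : ‖w‖ = 1) :
    (a, b, a * star b + s * t * star w) ∈ phaseHull := by
  have hww : w * star w = 1 := by
    rw [Complex.star_def, Complex.mul_conj, Complex.normSq_eq_norm_sq, hw]; simp
  obtain ⟨e, x, he, hx, h1, h2, h3, h4⟩ :=
    exists_shift a (star w * b) s t ha (by simpa [hw] using hb)
  have hee : e * star e = 1 := by
    rw [Complex.star_def, Complex.mul_conj, Complex.normSq_eq_norm_sq, he]; simp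
  have rot : ∀ k : ℝ, ‖star w * b + t * (k * e)‖ = 1 → ‖b + t * (k * (w * e))‖ = 1 := by
    intro k hk
    have : b + t * (k * (w * e)) = w * (star w * b + t * (k * e)) := by
      linear_combination (-b) * hww
    rw [this, norm_mul, hw, hk, one_mul]
  have hx2 : (1 + x ^ 2 : ℝ) ≠ 0 := by positivity
  have hxc : (x : ℂ) ≠ 0 := by exact_mod_cast hx.ne'
  have hx2c : (1 + x ^ 2 : ℂ) ≠ 0 := by exact_mod_cast hx2
  have hconv : Convex ℝ phaseHull := convex_convexHull ℝ _
  have m1 : (_, _, _) ∈ phaseHull := subset_convexHull ℝ _ ⟨_, _, h1, rot _ h3, rfl⟩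
  have m2 : (_, _, _) ∈ phaseHull := subset_convexHull ℝ _ ⟨_, _, h2, rot _ h4, rfl⟩
  -- these weights make the shift centred with second absolute moment one
  have := hconv m1 m2 (a := 1 / (1 + x ^ 2)) (b := x ^ 2 / (1 + x ^ 2)) (by positivity)
    (by positivity) (by field_simp)
  convert this using 1
  simp only [Prod.smul_mk, Prod.mk_add_mk, Prod.mk.injEq, Complex.real_smul]
  push_cast
  refine ⟨?_, ?_, ?_⟩
  · field_simp; ring
  · field_simp; ring
  · simp only [star_add, star_mul', Complex.star_def, Complex.conj_ofReal, map_neg, map_inv₀] at hee ⊢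
    field_simp
    linear_combination (-(s * t * (starRingEnd ℂ) w * (1 + x ^ 2)) : ℂ) * hee

/-- The determinant condition puts `c` in a disc, whose points are convex combinations of two
antipodal points of the boundary circle. -/
lemma mem_phaseHull (a b c : ℂ) (ha : ‖a‖ ^ 2 ≤ 1) (hb : ‖b‖ ^ 2 ≤ 1)
    (hc : ‖c - a * star b‖ ^ 2 ≤ (1 - ‖a‖ ^ 2) * (1 - ‖b‖ ^ 2)) : (a, b, c) ∈ phaseHull := by
  set s := Real.sqrt (1 - ‖a‖ ^ 2) with hs
  set t := Real.sqrt (1 - ‖b‖ ^ 2) with ht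
  have hs2 : s ^ 2 = 1 - ‖a‖ ^ 2 := Real.sq_sqrt (by linarith)
  have ht2 : t ^ 2 = 1 - ‖b‖ ^ 2 := Real.sq_sqrt (by linarith)
  have hs0 : 0 ≤ s := Real.sqrt_nonneg _
  have ht0 : 0 ≤ t := Real.sqrt_nonneg _
  have hle : ‖c - a * star b‖ ≤ s * t := by
    refine le_of_sq_le_sq ?_ (by positivity)
    rw [mul_pow, hs2, ht2]; exact hc
  obtain ⟨w, r, hw, hr0, hr1, hcw⟩ : ∃ (w : ℂ) (r : ℝ), ‖w‖ = 1 ∧ 0 ≤ r ∧ r ≤ 1 ∧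
      c = a * star b + r * (s * t * star w) := by
    by_cases h0 : c - a * star b = 0
    · exact ⟨1, 0, by simp, le_rfl, zero_le_one, by simpa [sub_eq_zero] using h0⟩
    · have hn : 0 < ‖c - a * star b‖ := norm_pos_iff.2 h0
      have hst : 0 < s * t := hn.trans_le hle
      refine ⟨star ((c - a * star b) / ‖c - a * star b‖), ‖c - a * star b‖ / (s * t), ?_,
        by positivity, (div_le_one hst).2 hle, ?_⟩
      · rw [norm_star, norm_div, Complex.norm_real, norm_norm, div_self hn.ne']
      · have h1 : (‖c - a * star b‖ : ℂ) ≠ 0 := by exact_mod_cast hn.ne'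
        have h2 : (s * t : ℂ) ≠ 0 := by exact_mod_cast hst.ne'
        generalize ‖c - a * star b‖ = N at h1
        rw [star_star]
        push_cast
        have h3 : (s : ℂ) ≠ 0 := left_ne_zero_of_mul h2
        have h4 : (t : ℂ) ≠ 0 := right_ne_zero_of_mul h2
        field_simp
        ring
  have hconv : Convex ℝ phaseHull := convex_convexHull ℝ _
  have := hconv (mem_phaseHull_of_boundary a b w s t (by linarith) (by linarith) hw)
    (mem_phaseHull_of_boundary a b (-w) s t (by linarith) (by linarith) (by simpa using hw))
    (a := (1 + r) / 2) (b := (1 - r) / 2) (by linarith) (by linarith) (by ring)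
  convert this using 1
  simp only [Prod.smul_mk, Prod.mk_add_mk, Prod.mk.injEq, Complex.real_smul]
  push_cast
  refine ⟨by ring, by ring, ?_⟩
  rw [hcw, star_neg]
  ring

/-- Points of `phaseHull` as finite averages of phases. -/
lemma exists_phases {a b c : ℂ} (h : (a, b, c) ∈ phaseHull) :
    ∃ (m : ℕ) (p : Fin m → ℝ) (x y : Fin m → ℂ), (∀ i, 0 ≤ p i) ∧ ∑ i, p i = 1 ∧
      (∀ i, ‖x i‖ = 1) ∧ (∀ i, ‖y i‖ = 1) ∧ ∑ i, (p i : ℂ) * x i = a ∧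
      ∑ i, (p i : ℂ) * y i = b ∧ ∑ i, (p i : ℂ) * (x i * star (y i)) = c := by
  obtain ⟨ι, _, p, z, hp, hp1, hz, hsum⟩ := mem_convexHull_iff_exists_fintype.1 h
  choose x y hx hy hxy using hz
  let f := (Fintype.equivFin ι).symm
  have hS : ∀ g : ι → ℂ, ∑ i, g (f i) = ∑ i, g i := fun g => f.sum_comp g
  refine ⟨Fintype.card ι, p ∘ f, x ∘ f, y ∘ f, fun i => hp _, ?_, fun i => hx _, fun i => hy _,
    ?_, ?_, ?_⟩
  · rw [← hp1]; exact f.sum_comp p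
  · have h_a := congrArg Prod.fst hsum
    dsimp only at h_a
    rw [← h_a, Prod.fst_sum]
    simpa [hxy] using hS fun i => (p i : ℂ) * x i
  · have hb := congrArg (fun q => q.2.1) hsum
    dsimp only at hb
    rw [← hb]
    simpa [hxy, Prod.fst_sum, Prod.snd_sum] using hS fun i => (p i : ℂ) * y i
  · have hc := congrArg (fun q => q.2.2) hsum
    dsimp only at hc
    rw [← hc]
    simpa [hxy, Prod.snd_sum] using hS fun i => (p i : ℂ) * (x i * star (y i))

/-- A decomposition into rank-one correlation matrices gives a random-unitary form of the Schur
multiplier, with the phase vectors as diagonals of the unitaries. -/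
lemma random_unitary_of_decomposition {d m : ℕ} (ξ : Matrix (Fin d) (Fin d) ℂ) (p : Fin m → ℝ)
    (v : Fin m → Fin d → ℂ) (hp : ∀ i, 0 ≤ p i) (hp1 : ∑ i, p i = 1)
    (hv : ∀ i k, ‖v i k‖ = 1)
    (hξ : ∀ k l, ξ k l = ∑ i, (p i : ℂ) * (v i k * star (v i l))) :
    ∃ (m : ℕ) (p : Fin m → ℝ) (U : Fin m → Matrix (Fin d) (Fin d) ℂ),
      (∀ i, 0 ≤ p i) ∧ (∑ i, p i = 1) ∧
      (∀ i, U i ∈ Matrix.unitaryGroup (Fin d) ℂ) ∧ (∀ i, (U i).IsDiag) ∧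
      ∀ ρ : Matrix (Fin d) (Fin d) ℂ,
        ξ ⊙ ρ = ∑ i, (p i : ℂ) • (U i * ρ * (U i)ᴴ) := by
  refine ⟨m, p, fun i => diagonal (v i), hp, hp1, fun i => ?_, fun i => isDiag_diagonal _, ?_⟩
  · rw [mem_unitaryGroup_iff, star_eq_conjTranspose, diagonal_conjTranspose, diagonal_mul_diagonal,
      ← diagonal_one]
    congr 1
    funext k
    simp [Complex.mul_conj, Complex.normSq_eq_norm_sq, hv]
  · intro ρ
    ext k l
    simp only [hadamard_apply, hξ, Finset.sum_mul, Matrix.sum_apply, Matrix.smul_apply,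
      diagonal_conjTranspose, mul_diagonal, diagonal_mul, smul_eq_mul, Pi.star_apply]
    exact Finset.sum_congr rfl fun i _ => by ring

lemma norm_sq_le_one_of_posSemidef {d : ℕ} {ξ : Matrix (Fin d) (Fin d) ℂ} (hpsd : ξ.PosSemidef)
    (hdiag : ∀ k, ξ k k = 1) (k l : Fin d) : ‖ξ k l‖ ^ 2 ≤ 1 := by
  have h := (hpsd.submatrix ![k, l]).det_nonneg
  rw [det_fin_two] at h
  simp only [submatrix_apply, cons_val_zero, cons_val_one, hdiag] at h
  rw [← hpsd.1.apply l k, Complex.star_def, Complex.mul_conj, Complex.normSq_eq_norm_sq] at h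
  have h' : (0 : ℂ) ≤ ((1 - ‖ξ k l‖ ^ 2 : ℝ) : ℂ) := by push_cast; simpa using h
  rw [Complex.zero_le_real] at h'
  linarith

/-- For `d = 2` or `d = 3`, the Schur multiplier by any correlation
matrix `ξ` is random-unitary: there are finitely many diagonal unitaries `U_i` and a
probability distribution `p_i` with `ξ ∘ ρ = Σ_i p_i U_i ρ U_i†` for all `ρ`;
equivalently `ξ` is a convex combination of rank-one correlation matrices. -/
theorem decoherence_is_random_unitary_in_dim_two_and_three
    (d : ℕ) (hd : d = 2 ∨ d = 3) (ξ : Matrix (Fin d) (Fin d) ℂ)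
    (hpsd : ξ.PosSemidef) (hdiag : ∀ k, ξ k k = 1) :
    ∃ (m : ℕ) (p : Fin m → ℝ) (U : Fin m → Matrix (Fin d) (Fin d) ℂ),
      (∀ i, 0 ≤ p i) ∧ (∑ i, p i = 1) ∧
      (∀ i, U i ∈ Matrix.unitaryGroup (Fin d) ℂ) ∧ (∀ i, (U i).IsDiag) ∧
      ∀ ρ : Matrix (Fin d) (Fin d) ℂ,
        ξ ⊙ ρ = ∑ i, (p i : ℂ) • (U i * ρ * (U i)ᴴ) := by
  have unit : ∀ z : ℂ, ‖z‖ = 1 → z * star z = 1 := fun z hz => by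
    rw [Complex.star_def, Complex.mul_conj, Complex.normSq_eq_norm_sq, hz]; simp
  have herm : ∀ k l, ξ k l = star (ξ l k) := fun k l => (hpsd.1.apply k l).symm
  have hn := norm_sq_le_one_of_posSemidef hpsd hdiag
  rcases hd with rfl | rfl
  · obtain ⟨m, p, x, y, hp, hp1, hx, -, hsx, -, -⟩ := exists_phases
      (mem_phaseHull (ξ 1 0) 0 0 (hn 1 0) (by simp) (by simpa using hn 1 0))
    have hp1c : ∑ i, (p i : ℂ) = 1 := by exact_mod_cast hp1
    refine random_unitary_of_decomposition ξ p (fun i => ![1, x i]) hp hp1 ?_ ?_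
    · intro i k
      fin_cases k <;> simp [hx]
    · intro k l
      have h01 : ξ 0 1 = ∑ i, (p i : ℂ) * (starRingEnd ℂ) (x i) := by simp [herm 0 1, ← hsx]
      simp only [Complex.star_def] at unit
      fin_cases k <;> fin_cases l <;> simp [hdiag, unit _ (hx _), hp1c, ← hsx, h01]
  · have hdet : ‖ξ 1 2 - ξ 1 0 * star (ξ 2 0)‖ ^ 2 ≤
        (1 - ‖ξ 1 0‖ ^ 2) * (1 - ‖ξ 2 0‖ ^ 2) := by
      have h := hpsd.det_nonneg
      rw [det_fin_three, hdiag, hdiag, hdiag, herm 0 1, herm 0 2, herm 2 1] at h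
      have h' := (Complex.le_def.1 h).1
      simp only [← Complex.normSq_eq_norm_sq, Complex.normSq_apply]
      simp at h' ⊢
      nlinarith [h']
    obtain ⟨m, p, x, y, hp, hp1, hx, hy, hsx, hsy, hsxy⟩ := exists_phases
      (mem_phaseHull (ξ 1 0) (ξ 2 0) (ξ 1 2) (hn 1 0) (hn 2 0) hdet)
    have hp1c : ∑ i, (p i : ℂ) = 1 := by exact_mod_cast hp1
    refine random_unitary_of_decomposition ξ p (fun i => ![1, x i, y i]) hp hp1 ?_ ?_
    · intro i k
      fin_cases k <;> simp [hx, hy]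
    · intro k l
      have h01 : ξ 0 1 = ∑ i, (p i : ℂ) * (starRingEnd ℂ) (x i) := by simp [herm 0 1, ← hsx]
      have h02 : ξ 0 2 = ∑ i, (p i : ℂ) * (starRingEnd ℂ) (y i) := by simp [herm 0 2, ← hsy]
      have h21 : ξ 2 1 = ∑ i, (p i : ℂ) * (y i * (starRingEnd ℂ) (x i)) := by
        simp [herm 2 1, ← hsxy, mul_comm]
      simp only [Complex.star_def] at unit hsxy
      fin_cases k <;> fin_cases l <;>
        simp [hdiag, unit _ (hx _), unit _ (hy _), hp1c, ← hsx, ← hsy, ← hsxy, h01, h02, h21]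
end

section
/- Let ξ be a d×d correlation matrix and suppose the Schur multiplier map admits the random-unitary decomposition ξ ∘ ρ = Σ_{i=1}^m p_i U_i ρ U_i† for all d×d matrices ρ, where U_i are d×d unitary matrices and (p_i) is a probability distribution. Then H(p) ≥ S(ξ/d), i.e. Σ_i η(p_i) ≥ Σ_j η(λ_j(ξ)/d), where λ_j(ξ) are the eigenvalues of ξ and η(x) = −x log x. -/
/-!
Testing the decomposition against the matrix units gives
`ξ k l = ∑ i, p i * (U i) k k * conj ((U i) l l)`, that is, `ξ / d = W * Wᴴ` where column `i` of
`W` is `√(p i / d)` times the diagonal of `U i`. Entries of a unitary matrix have modulus at most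
one, and `∑ i, p i * |(U i) k k|² = ξ k k = 1 = ∑ i, p i`, so `|(U i) k k| = 1` whenever `p i ≠ 0`;
hence column `i` of `W` has squared norm `p i`.

Passing to an eigenbasis of `ξ` by `C = Vᴴ * W` makes `C * Cᴴ` the diagonal matrix of the
eigenvalues `l j` of `ξ / d`, while column `i` of `C` still has squared norm `p i`. The matrix
`B i j = ‖C j i‖² / l j` (over `l j ≠ 0`) has column sums `1`, and its row sums are at most `1`
because they are the diagonal entries of the orthogonal projection `Cᴴ * diag(l⁻¹) * C`.
Since `p = B l`, concavity of `η` together with `η 0 = 0` gives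
`∑ i, η (p i) ≥ ∑ i, ∑ j, B i j * η (l j) = ∑ j, η (l j)`.
-/

open Matrix
open scoped ComplexOrder

/-- Diagonal entries of the projection `Cᴴ * diag(l⁻¹) * C` are at most one; indices with `l j = 0`
contribute `0` through `0⁻¹ = 0`. -/
lemma sum_inv_mul_norm_sq_le_one {n m : Type*} [Fintype n] [Fintype m] [DecidableEq n]
    (C : Matrix n m ℂ) (l : n → ℝ)
    (h : C * Cᴴ = diagonal (fun j => (l j : ℂ))) (i : m) :
    ∑ j, (l j)⁻¹ * ‖C j i‖ ^ 2 ≤ 1 := by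
  set D : Matrix n n ℂ := diagonal (fun j => ((l j)⁻¹ : ℂ)) with hD
  set P : Matrix m m ℂ := Cᴴ * D * C with hP
  have hDD : D * diagonal (fun j => (l j : ℂ)) * D = D := by
    rw [hD, diagonal_mul_diagonal, diagonal_mul_diagonal]
    congr 1
    ext j
    by_cases hj : (l j : ℂ) = 0
    · simp [hj]
    · field_simp
  have hPH : Pᴴ = P := by
    have hDH : Dᴴ = D := by
      rw [hD, diagonal_conjTranspose]
      congr 1
      ext j
      simp
    rw [hP, conjTranspose_mul, conjTranspose_mul, conjTranspose_conjTranspose, hDH,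
      Matrix.mul_assoc]
  have hPP : P * Pᴴ = P := by
    rw [hPH]
    calc P * P = Cᴴ * (D * (C * Cᴴ) * D) * C := by simp only [hP, Matrix.mul_assoc]
      _ = P := by rw [h, hDD]
  have hentry : P i i = ((∑ j, (l j)⁻¹ * ‖C j i‖ ^ 2 : ℝ) : ℂ) := by
    rw [hP, hD, Matrix.mul_apply]
    push_cast
    refine Finset.sum_congr rfl fun j _ => ?_
    rw [mul_diagonal, conjTranspose_apply, ← Complex.conj_mul' (C j i)]
    simp only [RCLike.star_def]
    ring
  have hsq : ∑ k, ‖P i k‖ ^ 2 = ∑ j, (l j)⁻¹ * ‖C j i‖ ^ 2 := by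
    have := congrFun (congrFun hPP i) i
    rw [hentry, Matrix.mul_apply] at this
    rw [← Complex.ofReal_inj, ← this]
    push_cast
    refine Finset.sum_congr rfl fun k _ => ?_
    rw [conjTranspose_apply, ← Complex.mul_conj' (P i k)]
    rfl
  have hle : ‖P i i‖ ^ 2 ≤ ∑ k, ‖P i k‖ ^ 2 :=
    Finset.single_le_sum (f := fun k => ‖P i k‖ ^ 2) (fun k _ => by positivity)
      (Finset.mem_univ i)
  rw [hsq, hentry, Complex.norm_real, Real.norm_eq_abs, sq_abs] at hle
  nlinarith

/-- If the rows of `C` are orthogonal with squared norms `l`, then the entropy of `l` is at most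
that of the squared column norms of `C`: the latter are the image of `l` under a doubly
substochastic matrix with unit column sums (on the support of `l`). -/
lemma sum_negMulLog_le_of_mul_conjTranspose_eq_diagonal {n m : Type*} [Fintype n] [Fintype m]
    [DecidableEq n] (C : Matrix n m ℂ) (l : n → ℝ)
    (h : C * Cᴴ = diagonal (fun j => (l j : ℂ))) :
    ∑ j, Real.negMulLog (l j) ≤ ∑ i, Real.negMulLog (∑ j, ‖C j i‖ ^ 2) := by
  have hrow : ∀ j, ∑ i, ‖C j i‖ ^ 2 = l j := by
    intro j
    have := congrFun (congrFun h j) j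
    rw [diagonal_apply_eq, Matrix.mul_apply] at this
    rw [← Complex.ofReal_inj, ← this]
    push_cast
    refine Finset.sum_congr rfl fun k _ => ?_
    rw [conjTranspose_apply, ← Complex.mul_conj' (C j k)]
    rfl
  have hl : ∀ j, 0 ≤ l j := fun j => by
    rw [← hrow j]
    positivity
  have hterm : ∀ j i, (l j)⁻¹ * ‖C j i‖ ^ 2 * l j = ‖C j i‖ ^ 2 := by
    intro j i
    by_cases hj : l j = 0
    · have h0 : ‖C j i‖ ^ 2 ≤ ∑ i, ‖C j i‖ ^ 2 :=
        Finset.single_le_sum (f := fun i => ‖C j i‖ ^ 2) (fun k _ => by positivity)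
          (Finset.mem_univ i)
      rw [hrow, hj] at h0
      have h1 : ‖C j i‖ ^ 2 = 0 := le_antisymm h0 (by positivity)
      rw [h1, hj]
      simp
    · field_simp
  have hjensen : ∀ i, ∑ j, (l j)⁻¹ * ‖C j i‖ ^ 2 * Real.negMulLog (l j)
      ≤ Real.negMulLog (∑ j, ‖C j i‖ ^ 2) := by
    intro i
    -- The missing weight `1 - ∑ j, B i j` is put on the point `0`, where `η` vanishes.
    have := Real.concaveOn_negMulLog.map_add_sum_le (t := Finset.univ)
      (w := fun j => (l j)⁻¹ * ‖C j i‖ ^ 2) (p := l)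
      (v := 1 - ∑ j, (l j)⁻¹ * ‖C j i‖ ^ 2) (q := 0)
      (fun j _ => mul_nonneg (inv_nonneg.2 (hl j)) (by positivity)) (by ring)
      (fun j _ => hl j) (sub_nonneg.2 (sum_inv_mul_norm_sq_le_one C l h i)) (by simp)
    simpa [hterm] using this
  calc ∑ j, Real.negMulLog (l j)
      = ∑ j, ∑ i, (l j)⁻¹ * ‖C j i‖ ^ 2 * Real.negMulLog (l j) := by
        refine Finset.sum_congr rfl fun j _ => ?_
        rw [← Finset.sum_mul, ← Finset.mul_sum, hrow]
        by_cases hj : l j = 0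
        · simp [hj]
        · field_simp
    _ = ∑ i, ∑ j, (l j)⁻¹ * ‖C j i‖ ^ 2 * Real.negMulLog (l j) := Finset.sum_comm
    _ ≤ _ := Finset.sum_le_sum fun i _ => hjensen i

/-- If the Schur multiplier by a correlation matrix `ξ` admits a
random-unitary decomposition `ξ ∘ ρ = Σ_i p_i U_i ρ U_i†`, then the Shannon entropy of
the distribution `p` is at least the von Neumann entropy of `ξ/d`:
`H(p) ≥ S(ξ/d)`. -/
theorem shannon_entropy_ge_entropy_exchange
    (d : ℕ) (hd : 0 < d) (ξ : Matrix (Fin d) (Fin d) ℂ)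
    (hpsd : ξ.PosSemidef) (hdiag : ∀ k, ξ k k = 1)
    (m : ℕ) (p : Fin m → ℝ) (U : Fin m → Matrix (Fin d) (Fin d) ℂ)
    (hp : ∀ i, 0 ≤ p i) (hp1 : ∑ i, p i = 1)
    (hU : ∀ i, U i ∈ Matrix.unitaryGroup (Fin d) ℂ)
    (hdec : ∀ ρ : Matrix (Fin d) (Fin d) ℂ,
      ξ ⊙ ρ = ∑ i, (p i : ℂ) • (U i * ρ * (U i)ᴴ)) :
    ∑ j, Real.negMulLog (hpsd.1.eigenvalues j / d) ≤ ∑ i, Real.negMulLog (p i) := by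
  have hd' : (0 : ℝ) < d := by exact_mod_cast hd
  have hξ : ∀ k l, ξ k l = ∑ i, (p i : ℂ) * (U i k k * star (U i l l)) := by
    intro k l
    have := congrFun (congrFun (hdec (Matrix.single k l 1)) k) l
    simpa [Matrix.sum_apply, Matrix.mul_apply, Matrix.single_apply, Matrix.hadamard_apply,
      Finset.sum_ite_eq, ite_and] using this
  have hle : ∀ i k, ‖U i k k‖ ^ 2 ≤ 1 := fun i k =>
    pow_le_one₀ (norm_nonneg _) (entry_norm_bound_of_unitary (hU i) k k)
  have hsum : ∀ k, ∑ i, p i * ‖U i k k‖ ^ 2 = 1 := by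
    intro k
    rw [← Complex.ofReal_inj, Complex.ofReal_one, ← hdiag k, hξ k k]
    push_cast
    refine Finset.sum_congr rfl fun i _ => ?_
    rw [← Complex.mul_conj' (U i k k)]
    rfl
  have hpU : ∀ i k, p i * ‖U i k k‖ ^ 2 = p i := by
    intro i k
    have hall := (Finset.sum_eq_sum_iff_of_le (s := Finset.univ)
      (fun i _ => mul_le_of_le_one_right (hp i) (hle i k))).1 ((hsum k).trans hp1.symm)
    exact hall i (Finset.mem_univ i)
  set W : Matrix (Fin d) (Fin m) ℂ := Matrix.of fun k i => (√(p i / d) : ℂ) * U i k k with hW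
  have hs : ∀ i, (√(p i / d) : ℂ) * √(p i / d) = p i / d := by
    intro i
    rw [← Complex.ofReal_mul, Real.mul_self_sqrt (div_nonneg (hp i) hd'.le)]
    push_cast
    rfl
  have hWW : W * Wᴴ = (d : ℂ)⁻¹ • ξ := by
    ext k l
    rw [Matrix.mul_apply, Matrix.smul_apply, hξ, smul_eq_mul, Finset.mul_sum]
    refine Finset.sum_congr rfl fun i _ => ?_
    simp only [hW, conjTranspose_apply, Matrix.of_apply, RCLike.star_def, map_mul,
      Complex.conj_ofReal]
    linear_combination (U i k k * (starRingEnd ℂ) (U i l l)) * hs i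
  set V : Matrix (Fin d) (Fin d) ℂ := hpsd.1.eigenvectorUnitary.1 with hV
  have hVV : V * Vᴴ = 1 := (Matrix.mem_unitaryGroup_iff).1 hpsd.1.eigenvectorUnitary.2
  have hdiagonal : Vᴴ * ξ * V = diagonal (fun j => (hpsd.1.eigenvalues j : ℂ)) := by
    have hVV' : Vᴴ * V = 1 := (Matrix.mem_unitaryGroup_iff').1 hpsd.1.eigenvectorUnitary.2
    have hspec : ξ = V * diagonal (fun j => (hpsd.1.eigenvalues j : ℂ)) * Vᴴ := by
      have := hpsd.1.spectral_theorem
      rw [Unitary.conjStarAlgAut_apply] at this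
      exact this
    calc Vᴴ * ξ * V
        = Vᴴ * (V * diagonal (fun j => (hpsd.1.eigenvalues j : ℂ)) * Vᴴ) * V := by rw [← hspec]
      _ = (Vᴴ * V) * diagonal (fun j => (hpsd.1.eigenvalues j : ℂ)) * (Vᴴ * V) := by
        simp only [Matrix.mul_assoc]
      _ = _ := by rw [hVV', Matrix.one_mul, Matrix.mul_one]
  have hC : (Vᴴ * W) * (Vᴴ * W)ᴴ
      = diagonal (fun j => ((hpsd.1.eigenvalues j / d : ℝ) : ℂ)) := by
    rw [conjTranspose_mul, conjTranspose_conjTranspose]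
    calc Vᴴ * W * (Wᴴ * V) = Vᴴ * (W * Wᴴ) * V := by simp only [Matrix.mul_assoc]
      _ = (d : ℂ)⁻¹ • (Vᴴ * ξ * V) := by rw [hWW, Matrix.mul_smul, Matrix.smul_mul]
      _ = _ := by
        rw [hdiagonal, ← diagonal_smul]
        congr 1
        ext j
        simp [div_eq_inv_mul]
  have hcol : ∀ i, ∑ j, ‖(Vᴴ * W) j i‖ ^ 2 = p i := by
    intro i
    -- The squared column norms are diagonal entries of a Gram matrix that does not involve `V`.
    have hG : (Vᴴ * W)ᴴ * (Vᴴ * W) = Wᴴ * W := by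
      rw [conjTranspose_mul, conjTranspose_conjTranspose]
      calc Wᴴ * V * (Vᴴ * W) = Wᴴ * (V * Vᴴ) * W := by simp only [Matrix.mul_assoc]
        _ = _ := by rw [hVV, Matrix.mul_one]
    have hGi := congrFun (congrFun hG i) i
    rw [Matrix.mul_apply, Matrix.mul_apply] at hGi
    have hnorm : ∀ z : ℂ, star z * z = ((‖z‖ ^ 2 : ℝ) : ℂ) := fun z => by
      rw [Complex.ofReal_pow]
      exact Complex.conj_mul' z
    simp only [conjTranspose_apply, hnorm, ← Complex.ofReal_sum, Complex.ofReal_inj] at hGi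
    rw [hGi]
    have hterm : ∀ k, ‖W k i‖ ^ 2 = p i / d := by
      intro k
      simp only [hW, Matrix.of_apply, norm_mul, Complex.norm_real, Real.norm_eq_abs, mul_pow,
        sq_abs]
      rw [Real.sq_sqrt (div_nonneg (hp i) hd'.le), div_mul_eq_mul_div, hpU]
    simp only [hterm, Finset.sum_const, Finset.card_univ, Fintype.card_fin, nsmul_eq_mul]
    field_simp
  have hmain := sum_negMulLog_le_of_mul_conjTranspose_eq_diagonal (Vᴴ * W) _ hC
  simpa only [hcol] using hmain
end

section
/- Let ξ be a d×d correlation matrix and suppose ξ ∘ ρ = Σ_{i=1}^m p_i U_i ρ U_i† for all d×d matrices ρ, where U_i are d×d unitary matrices with pairwise orthogonal traces, Tr[U_i U_j†] = d·δ_{ij}, and (p_i) is a probability distribution. Then H(p) = S(ξ/d): the Shannon entropy Σ_i η(p_i) equals the von Neumann entropy Σ_j η(λ_j(ξ)/d) of ξ/d. -/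
open Matrix
open scoped ComplexOrder

/-!
Testing the decomposition on the matrix unit `E_kk` shows that `p i * |U i a k| ^ 2` vanishes for
`a ≠ k`, so every unitary with nonzero weight is diagonal. Collect the weighted diagonals as the
columns of the `d × m` matrix `V k i = √(p i) * U i k k`. Then `V * Vᴴ = ξ` (test on `E_kl`), while
trace orthogonality says exactly that `Vᴴ * V = diagonal (d * p i)`. Since `V * Vᴴ` and `Vᴴ * V`
have the same characteristic polynomial up to powers of `X`, the eigenvalues of `ξ` and the numbers
`d * p i` agree as multisets up to zeros, and zeros contribute nothing to the entropy.
-/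

/-- Entrywise form of the decomposition, from evaluating it on the matrix unit `E_kl`. -/
lemma schur_decomposition_entry {d m : ℕ} {ξ : Matrix (Fin d) (Fin d) ℂ}
    {p : Fin m → ℝ} {U : Fin m → Matrix (Fin d) (Fin d) ℂ}
    (hdec : ∀ ρ : Matrix (Fin d) (Fin d) ℂ,
      ξ ⊙ ρ = ∑ i, (p i : ℂ) • (U i * ρ * (U i)ᴴ)) (a b k l : Fin d) :
    ∑ i, (p i : ℂ) * (U i a k * star (U i b l)) = if k = a ∧ l = b then ξ a b else 0 := by
  have h := congrFun (congrFun (hdec (Matrix.single k l 1)) a) b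
  rw [Matrix.sum_apply] at h
  simp only [Matrix.hadamard_apply, Matrix.single_apply, Matrix.smul_apply, smul_eq_mul,
    mul_ite, mul_one, mul_zero] at h
  rw [h]
  refine Finset.sum_congr rfl fun i _ => ?_
  congr 1
  rw [Matrix.mul_apply, Finset.sum_eq_single l]
  · simp
  · intro x _ hx
    simp [hx]
  · simp

/-- A matrix that occurs with nonzero weight is diagonal, since for `a ≠ k`
the `(a, a)` entry of the decomposition at `E_kk` is a vanishing sum of nonnegative terms. -/
lemma weighted_offDiag_eq_zero {d m : ℕ} {ξ : Matrix (Fin d) (Fin d) ℂ}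
    {p : Fin m → ℝ} {U : Fin m → Matrix (Fin d) (Fin d) ℂ} (hp : ∀ i, 0 ≤ p i)
    (hdec : ∀ ρ : Matrix (Fin d) (Fin d) ℂ,
      ξ ⊙ ρ = ∑ i, (p i : ℂ) • (U i * ρ * (U i)ᴴ)) (i : Fin m) {a k : Fin d} (hak : a ≠ k) :
    p i = 0 ∨ U i a k = 0 := by
  have h := schur_decomposition_entry hdec a a k k
  rw [if_neg (fun h => hak h.1.symm)] at h
  have h2 : ∑ i, p i * Complex.normSq (U i a k) = 0 := by
    have : ((∑ i, p i * Complex.normSq (U i a k) : ℝ) : ℂ) = 0 := by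
      rw [← h]
      push_cast
      exact Finset.sum_congr rfl fun i _ => by rw [← Complex.mul_conj]; rfl
    exact_mod_cast this
  rw [Finset.sum_eq_zero_iff_of_nonneg
    (fun i _ => mul_nonneg (hp i) (Complex.normSq_nonneg _))] at h2
  simpa using h2 i (Finset.mem_univ i)

/-- The eigenvalues of `V * Vᴴ` and the entries `q` of the diagonal matrix `Vᴴ * V` agree as
multisets up to zeros, so any function vanishing at zero has the same sum over both. -/
lemma sum_eigenvalues_eq_of_conjTranspose_mul_self {d m : ℕ} {ξ : Matrix (Fin d) (Fin d) ℂ}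
    (hξ : ξ.IsHermitian) (V : Matrix (Fin d) (Fin m) ℂ) (hV : V * Vᴴ = ξ) (q : Fin m → ℝ)
    (hq : Vᴴ * V = Matrix.diagonal fun i => (q i : ℂ)) (f : ℝ → ℝ) (hf : f 0 = 0) :
    ∑ i, f (q i) = ∑ j, f (hξ.eigenvalues j) := by
  have h := Matrix.charpoly_mul_comm' V Vᴴ
  rw [hV, hq, Matrix.charpoly_diagonal, hξ.charpoly_eq] at h
  have h2 := congrArg (fun P : Polynomial ℂ => (P.roots.map fun z => f z.re).sum) h
  have hne : ∀ (n k : ℕ) (g : Fin n → ℂ),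
      (Polynomial.X ^ k * ∏ i, (Polynomial.X - Polynomial.C (g i)) : Polynomial ℂ) ≠ 0 :=
    fun n k g => mul_ne_zero (pow_ne_zero _ Polynomial.X_ne_zero)
      (Finset.prod_ne_zero_iff.mpr fun i _ => Polynomial.X_sub_C_ne_zero _)
  have key : ∀ (n k : ℕ) (g : Fin n → ℂ),
      (((Polynomial.X ^ k * ∏ i, (Polynomial.X - Polynomial.C (g i)) : Polynomial ℂ).roots).map
        fun z => f z.re).sum = ∑ i, f (g i).re := by
    intro n k g
    rw [Polynomial.roots_mul (hne n k g), Polynomial.roots_X_pow, Polynomial.roots_prod _ _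
      (Finset.prod_ne_zero_iff.mpr fun i _ => Polynomial.X_sub_C_ne_zero _)]
    simp [Multiset.map_nsmul, Multiset.sum_nsmul, hf, List.sum_ofFn]
  simp only [Fintype.card_fin] at h2
  rw [key, key] at h2
  simpa using h2.symm

/-- If the Schur multiplier by a correlation matrix `ξ` admits a
random-unitary decomposition `ξ ∘ ρ = Σ_i p_i U_i ρ U_i†` with pairwise trace-orthogonal
unitaries (`Tr[U_i U_j†] = d δ_{ij}`), then the Shannon entropy of `p` equals the
von Neumann entropy of `ξ/d`: `H(p) = S(ξ/d)`. -/
theorem shannon_entropy_eq_entropy_exchange_of_trace_orthogonal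
    (d : ℕ) (hd : 0 < d) (ξ : Matrix (Fin d) (Fin d) ℂ)
    (hpsd : ξ.PosSemidef) (hdiag : ∀ k, ξ k k = 1)
    (m : ℕ) (p : Fin m → ℝ) (U : Fin m → Matrix (Fin d) (Fin d) ℂ)
    (hp : ∀ i, 0 ≤ p i) (hp1 : ∑ i, p i = 1)
    (hU : ∀ i, U i ∈ Matrix.unitaryGroup (Fin d) ℂ)
    (horth : ∀ i j, (U i * (U j)ᴴ).trace = if i = j then (d : ℂ) else 0)
    (hdec : ∀ ρ : Matrix (Fin d) (Fin d) ℂ,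
      ξ ⊙ ρ = ∑ i, (p i : ℂ) • (U i * ρ * (U i)ᴴ)) :
    ∑ i, Real.negMulLog (p i) = ∑ j, Real.negMulLog (hpsd.1.eigenvalues j / d) := by
  have hsq : ∀ i, ((√(p i) : ℝ) : ℂ) * ((√(p i) : ℝ) : ℂ) = (p i : ℂ) := fun i => by
    exact_mod_cast Real.mul_self_sqrt (hp i)
  have hd' : (d : ℝ) ≠ 0 := by positivity
  let V : Matrix (Fin d) (Fin m) ℂ := Matrix.of fun k i => ((√(p i) : ℝ) : ℂ) * U i k k
  have hV : V * Vᴴ = ξ := by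
    ext k l
    have h := schur_decomposition_entry hdec k l k l
    rw [if_pos ⟨rfl, rfl⟩] at h
    rw [← h, Matrix.mul_apply]
    refine Finset.sum_congr rfl fun i _ => ?_
    rw [← hsq i]
    simp only [V, Matrix.conjTranspose_apply, Matrix.of_apply, star_mul', RCLike.star_def,
      Complex.conj_ofReal]
    ring
  have hq : Vᴴ * V = Matrix.diagonal fun i => ((d * p i : ℝ) : ℂ) := by
    ext i j
    have h : (Vᴴ * V) i j = ((√(p i) : ℝ) : ℂ) * ((√(p j) : ℝ) : ℂ) * (U j * (U i)ᴴ).trace := by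
      rw [Matrix.mul_apply, Matrix.trace, Finset.mul_sum]
      refine Finset.sum_congr rfl fun k _ => ?_
      rw [Matrix.diag_apply, Matrix.mul_apply, Finset.mul_sum, Finset.sum_eq_single k]
      · simp only [V, Matrix.conjTranspose_apply, Matrix.of_apply, star_mul', RCLike.star_def,
          Complex.conj_ofReal]
        ring
      · intro l _ hl
        rcases weighted_offDiag_eq_zero hp hdec j hl.symm with h0 | h0 <;> simp [h0]
      · simp
    rw [h, horth, Matrix.diagonal_apply]
    by_cases hij : i = j
    · subst hij
      rw [if_pos rfl, if_pos rfl, hsq]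
      push_cast
      ring
    · rw [if_neg (Ne.symm hij), if_neg hij, mul_zero]
  have := sum_eigenvalues_eq_of_conjTranspose_mul_self hpsd.1 V hV _ hq
    (fun x => Real.negMulLog (x / d)) (by simp)
  rw [← this]
  exact Finset.sum_congr rfl fun i _ => by rw [mul_div_cancel_left₀ _ hd']
end

section
/- Let ξ be a d×d correlation matrix such that the Schur multiplier map ρ ↦ ξ ∘ ρ is random-unitary (i.e. admits at least one decomposition ξ ∘ ρ = Σ_i q_i V_i ρ V_i† with unitaries V_i and a probability distribution q). Then there exists a random-unitary decomposition ξ ∘ ρ = Σ_{i=1}^m p_i U_i ρ U_i† (for all ρ, with U_i unitary and p a probability distribution) whose Shannon entropy satisfies H(p) = Σ_i η(p_i) ≤ 2 log(rank ξ). -/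
/-!
A unitary appearing with positive weight in a decomposition of a Schur multiplier is diagonal
(apply the map to the matrix units `E_kk`), so being random-unitary means that `ξ` is a convex
combination of matrices `v v†` whose vectors `v` have unimodular entries
(`mem_convexHull_of_randomUnitary`). Carathéodory's theorem makes these matrices affinely
independent with positive weights. Then every `v` lies in the range of `ξ`
(`mem_range_of_sum_vecMulVec`), so the matrices `v v†` lie in a complex space of dimension
`(rank ξ)²`. Since they are Hermitian and share a nonzero diagonal entry, affine independence over
`ℝ` gives linear independence over `ℂ`; hence at most `(rank ξ)²` terms occur
(`card_le_finrank_sq`), and the entropy is at most `log ((rank ξ)²)`.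
-/

open Matrix
open scoped ComplexOrder

/-- The rank-one correlation matrices: the matrices `v v†` with `v` having unimodular entries. -/
def unimodularRankOne (d : ℕ) : Set (Matrix (Fin d) (Fin d) ℂ) :=
  {X | ∃ v : Fin d → ℂ, (∀ k, ‖v k‖ = 1) ∧ X = vecMulVec v (star v)}

/-- A unitary of nonzero weight in a random-unitary decomposition of a Schur multiplier is
diagonal: for `a ≠ k`, the entry `(a, a)` of the image of `E_kk` is zero, and it equals the
weighted sum of the `‖V i a k‖ ^ 2`. -/
lemma offDiag_eq_zero {d m : ℕ} {ξ : Matrix (Fin d) (Fin d) ℂ} {q : Fin m → ℝ}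
    {V : Fin m → Matrix (Fin d) (Fin d) ℂ} (hq : ∀ i, 0 ≤ q i)
    (h : ∀ ρ : Matrix (Fin d) (Fin d) ℂ, ξ ⊙ ρ = ∑ i, (q i : ℂ) • (V i * ρ * (V i)ᴴ))
    {i : Fin m} (hi : q i ≠ 0) {a k : Fin d} (hak : a ≠ k) : V i a k = 0 := by
  have h1 := congrFun (congrFun (h (single k k 1)) a) a
  have h2 : ∀ j, (V j * Matrix.single k k (1 : ℂ) * (V j)ᴴ : Matrix (Fin d) (Fin d) ℂ) a a =
      ((‖V j a k‖ ^ 2 : ℝ) : ℂ) := by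
    intro j
    rw [mul_apply, Finset.sum_eq_single k]
    · rw [mul_single_apply_same, conjTranspose_apply, mul_one, Complex.ofReal_pow]
      exact Complex.mul_conj' _
    · intro b _ hb
      rw [mul_single_apply_of_ne _ _ _ _ _ hb, zero_mul]
    · simp
  simp only [hadamard_apply, Matrix.sum_apply, Matrix.smul_apply, h2, smul_eq_mul] at h1
  rw [single_apply_of_ne (h := fun hh => hak hh.1.symm), mul_zero] at h1
  have h3 : ∑ j, q j * ‖V j a k‖ ^ 2 = 0 := by exact_mod_cast h1.symm
  rw [Finset.sum_eq_zero_iff_of_nonneg (fun j _ => mul_nonneg (hq j) (sq_nonneg _))] at h3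
  simpa [hi] using h3 i (Finset.mem_univ i)

lemma norm_diag_eq_one {d : ℕ} {V : Matrix (Fin d) (Fin d) ℂ} (hV : V ∈ unitaryGroup (Fin d) ℂ)
    (h : ∀ a k, a ≠ k → V a k = 0) (k : Fin d) : ‖V k k‖ = 1 := by
  have h1 := congrFun (congrFun (mem_unitaryGroup_iff.mp hV) k) k
  rw [mul_apply, Finset.sum_eq_single k (fun b _ hb => by rw [h k b hb.symm, zero_mul]) (by simp),
    one_apply_eq, star_apply] at h1
  have h2 : ‖V k k‖ ^ 2 = 1 := by
    have := (Complex.mul_conj' (V k k)).symm.trans h1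
    exact_mod_cast this
  exact (pow_eq_one_iff_of_nonneg (norm_nonneg _) two_ne_zero).mp h2

lemma mem_convexHull_of_randomUnitary {d m : ℕ} {ξ : Matrix (Fin d) (Fin d) ℂ} {q : Fin m → ℝ}
    {V : Fin m → Matrix (Fin d) (Fin d) ℂ} (hq : ∀ i, 0 ≤ q i) (hq1 : ∑ i, q i = 1)
    (hV : ∀ i, V i ∈ unitaryGroup (Fin d) ℂ)
    (h : ∀ ρ : Matrix (Fin d) (Fin d) ℂ, ξ ⊙ ρ = ∑ i, (q i : ℂ) • (V i * ρ * (V i)ᴴ)) :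
    ξ ∈ convexHull ℝ (unimodularRankOne d) := by
  -- Terms of weight zero need not be diagonal, so their vectors are replaced by the constant `1`.
  let v : Fin m → Fin d → ℂ := fun i k => if q i = 0 then 1 else V i k k
  have hv : ∀ i k, ‖v i k‖ = 1 := by
    intro i k
    by_cases hi : q i = 0
    · simp [v, hi]
    · simpa [v, hi] using
        norm_diag_eq_one (hV i) (fun a b hab => offDiag_eq_zero hq h hi hab) k
  have hξ : ξ = ∑ i, q i • vecMulVec (v i) (star (v i)) := by
    ext k l
    have h1 := congrFun (congrFun (h (single k l 1)) k) l
    simp only [hadamard_apply, Matrix.sum_apply, Matrix.smul_apply, single_apply_same, mul_one,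
      smul_eq_mul] at h1
    rw [h1, Matrix.sum_apply]
    refine Finset.sum_congr rfl fun i _ => ?_
    by_cases hi : q i = 0
    · simp [hi]
    · rw [mul_apply, Finset.sum_eq_single l
        (fun b _ hb => by rw [mul_single_apply_of_ne _ _ _ _ _ hb, zero_mul]) (by simp)]
      simp [v, hi, vecMulVec_apply]
  rw [hξ]
  exact (convex_convexHull ℝ _).sum_mem (fun i _ => hq i) hq1
    fun i _ => subset_convexHull ℝ _ ⟨v i, hv i, rfl⟩

/-- With `M` the matrix of columns `√(w i) v i` one has `ξ = M M†`, and `M M†` and `M` have the same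
range because they have the same rank. -/
lemma mem_range_of_sum_vecMulVec {d : ℕ} {ι : Type*} [Fintype ι] {ξ : Matrix (Fin d) (Fin d) ℂ}
    {w : ι → ℝ} {v : ι → Fin d → ℂ} (hw : ∀ i, 0 < w i)
    (h : ∑ i, w i • vecMulVec (v i) (star (v i)) = ξ) (i : ι) : v i ∈ ξ.mulVecLin.range := by
  classical
  let M : Matrix (Fin d) ι ℂ := of fun k i => (√(w i) : ℂ) * v i k
  have hM : M * Mᴴ = ξ := by
    rw [← h]
    ext k l
    rw [mul_apply, Matrix.sum_apply]
    refine Finset.sum_congr rfl fun i _ => ?_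
    have hs : (√(w i) : ℂ) * (√(w i) : ℂ) = (w i : ℂ) := by
      exact_mod_cast Real.mul_self_sqrt (hw i).le
    simp only [M, of_apply, conjTranspose_apply, star_mul', vecMulVec_apply, Matrix.smul_apply,
      Pi.star_apply, Complex.real_smul, ← hs, RCLike.star_def, Complex.conj_ofReal]
    ring
  have hle : (M * Mᴴ).mulVecLin.range ≤ M.mulVecLin.range := by
    rw [mulVecLin_mul]
    exact LinearMap.range_comp_le_range _ _
  have heq : (M * Mᴴ).mulVecLin.range = M.mulVecLin.range :=
    Submodule.eq_of_le_of_finrank_eq hle (rank_self_mul_conjTranspose M)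
  rw [← hM, heq]
  have hne : (√(w i) : ℂ) ≠ 0 := by exact_mod_cast (Real.sqrt_pos.mpr (hw i)).ne'
  refine ⟨Pi.single i (√(w i) : ℂ)⁻¹, ?_⟩
  ext k
  simp [M, mulVec_single]
  field_simp

/-- Affine independence over `ℝ` becomes linear independence over `ℂ`: the family is Hermitian, so
a complex relation splits into two real ones, and the diagonal entry `1` shows that the
coefficients of a real relation sum to zero. -/
lemma linearIndependent_of_affineIndependent {d : ℕ} {ι : Type*} [Fintype ι]
    {v : ι → Fin d → ℂ} (k : Fin d) (hv : ∀ i, ‖v i k‖ = 1)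
    (h : AffineIndependent ℝ fun i => vecMulVec (v i) (star (v i))) :
    LinearIndependent ℂ fun i => vecMulVec (v i) (star (v i)) := by
  have hreal : ∀ c : ι → ℝ, ∑ i, c i • vecMulVec (v i) (star (v i)) = 0 → ∀ i, c i = 0 := by
    intro c hc i
    have hsum : ∑ i, c i = 0 := by
      have h1 := congrFun (congrFun hc k) k
      have h2 : ∀ i, v i k * star (v i k) = 1 := fun i => by
        rw [RCLike.star_def, Complex.mul_conj', hv i]; simp
      simp only [Matrix.sum_apply, Matrix.smul_apply, vecMulVec_apply, Pi.star_apply, h2,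
        Matrix.zero_apply, Complex.real_smul, mul_one] at h1
      exact_mod_cast h1
    refine (affineIndependent_iff_of_fintype ℝ _).mp h c hsum ?_ i
    rw [Finset.weightedVSub_eq_linear_combination _ hsum]
    exact hc
  rw [Fintype.linearIndependent_iff]
  intro g hg
  have hg' : ∑ i, star (g i) • vecMulVec (v i) (star (v i)) = 0 := by
    have := congrArg conjTranspose hg
    simpa [conjTranspose_sum, conjTranspose_vecMulVec] using this
  have hre : ∀ i, (g i).re = 0 := by
    refine hreal _ ?_
    ext a b
    have h1 := congrFun (congrFun hg a) b
    have h2 := congrFun (congrFun hg' a) b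
    simp only [Matrix.sum_apply, Matrix.smul_apply, Matrix.zero_apply, smul_eq_mul,
      Complex.real_smul] at h1 h2 ⊢
    have h3 : ∀ i, ((g i).re : ℂ) = (g i + star (g i)) / 2 := fun i =>
      Complex.re_eq_add_conj (g i)
    simp only [h3, add_div, add_mul, Finset.sum_add_distrib, div_mul_eq_mul_div,
      ← Finset.sum_div, h1, h2]
    simp
  have him : ∀ i, (g i).im = 0 := by
    refine hreal _ ?_
    ext a b
    have h1 := congrFun (congrFun hg a) b
    simp only [Matrix.sum_apply, Matrix.smul_apply, Matrix.zero_apply, smul_eq_mul,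
      Complex.real_smul] at h1 ⊢
    have h3 : ∀ i, g i = ((g i).im : ℂ) * Complex.I := fun i => by
      apply Complex.ext <;> simp [hre i]
    have h4 : (∑ i, ((g i).im : ℂ) * vecMulVec (v i) (star (v i)) a b) * Complex.I = 0 := by
      rw [← h1, Finset.sum_mul]
      refine Finset.sum_congr rfl fun i _ => ?_
      conv_rhs => rw [h3 i]
      ring
    exact (mul_eq_zero.mp h4).resolve_right Complex.I_ne_zero
  exact fun i => Complex.ext (hre i) (him i)

/-- The products `b_j b_l†` of a basis `b` of `W` span all `v v†` with `v ∈ W`. -/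
lemma card_le_finrank_sq {d : ℕ} {ι : Type*} [Fintype ι] {v : ι → Fin d → ℂ}
    (W : Submodule ℂ (Fin d → ℂ)) (hW : ∀ i, v i ∈ W)
    (h : LinearIndependent ℂ fun i => vecMulVec (v i) (star (v i))) :
    Fintype.card ι ≤ Module.finrank ℂ W ^ 2 := by
  classical
  let b := Module.finBasis ℂ W
  let B : Fin (Module.finrank ℂ W) × Fin (Module.finrank ℂ W) → Matrix (Fin d) (Fin d) ℂ :=
    fun p => vecMulVec (b p.1 : Fin d → ℂ) (star (b p.2 : Fin d → ℂ))
  have hspan : ∀ i, vecMulVec (v i) (star (v i)) ∈ Submodule.span ℂ (Set.range B) := by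
    intro i
    set c := b.repr ⟨v i, hW i⟩ with hc
    have hvi : v i = ∑ j, c j • (b j : Fin d → ℂ) := by
      have := congrArg W.subtype (b.sum_repr ⟨v i, hW i⟩)
      rw [map_sum] at this
      exact this.symm
    have hexp : vecMulVec (v i) (star (v i)) = ∑ j, ∑ l, (c j * star (c l)) • B (j, l) := by
      ext x y
      simp only [hvi, vecMulVec_apply, Finset.sum_apply, Pi.star_apply, Pi.smul_apply, star_sum,
        star_smul, Finset.sum_mul_sum, Matrix.sum_apply, Matrix.smul_apply, B, smul_eq_mul]
      refine Finset.sum_congr rfl fun j _ => Finset.sum_congr rfl fun l _ => ?_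
      ring
    rw [hexp]
    exact Submodule.sum_mem _ fun j _ => Submodule.sum_mem _ fun l _ =>
      Submodule.smul_mem _ _ (Submodule.subset_span ⟨(j, l), rfl⟩)
  refine (linearIndependent_le_span_aux' _ h (Set.range B)
    (by rintro _ ⟨i, rfl⟩; exact hspan i)).trans ?_
  refine (Fintype.card_range_le B).trans ?_
  simp [sq]

lemma sum_negMulLog_le_log_card {ι : Type*} [Fintype ι] {p : ι → ℝ} (hp : ∀ i, 0 < p i)
    (hp1 : ∑ i, p i = 1) : ∑ i, Real.negMulLog (p i) ≤ Real.log (Fintype.card ι) := by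
  have h := strictConcaveOn_log_Ioi.concaveOn.le_map_sum (t := Finset.univ) (w := p)
    (p := fun i => (p i)⁻¹) (fun i _ => (hp i).le) hp1 (fun i _ => inv_pos.mpr (hp i))
  have h2 : ∀ i, p i * (p i)⁻¹ = 1 := fun i => mul_inv_cancel₀ (hp i).ne'
  simpa [h2, Real.negMulLog, Real.log_inv] using h

lemma diagonal_mem_unitaryGroup {d : ℕ} {v : Fin d → ℂ} (hv : ∀ k, ‖v k‖ = 1) :
    diagonal v ∈ unitaryGroup (Fin d) ℂ := by
  rw [mem_unitaryGroup_iff, star_eq_conjTranspose, diagonal_conjTranspose, diagonal_mul_diagonal,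
    ← diagonal_one]
  congr 1
  ext k
  rw [Pi.star_apply, RCLike.star_def, Complex.mul_conj', hv k]
  simp

/-- If the Schur multiplier by a correlation matrix `ξ` is
random-unitary, then it admits a random-unitary decomposition whose Shannon entropy is
at most `2 log (rank ξ)`. -/
theorem exists_random_unitary_decomposition_entropy_le_two_log_rank
    (d : ℕ) (hd : 0 < d) (ξ : Matrix (Fin d) (Fin d) ℂ)
    (hpsd : ξ.PosSemidef) (hdiag : ∀ k, ξ k k = 1)
    (hru : ∃ (m : ℕ) (q : Fin m → ℝ) (V : Fin m → Matrix (Fin d) (Fin d) ℂ),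
      (∀ i, 0 ≤ q i) ∧ (∑ i, q i = 1) ∧
      (∀ i, V i ∈ Matrix.unitaryGroup (Fin d) ℂ) ∧
      ∀ ρ : Matrix (Fin d) (Fin d) ℂ,
        ξ ⊙ ρ = ∑ i, (q i : ℂ) • (V i * ρ * (V i)ᴴ)) :
    ∃ (m : ℕ) (p : Fin m → ℝ) (U : Fin m → Matrix (Fin d) (Fin d) ℂ),
      (∀ i, 0 ≤ p i) ∧ (∑ i, p i = 1) ∧
      (∀ i, U i ∈ Matrix.unitaryGroup (Fin d) ℂ) ∧
      (∀ ρ : Matrix (Fin d) (Fin d) ℂ,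
        ξ ⊙ ρ = ∑ i, (p i : ℂ) • (U i * ρ * (U i)ᴴ)) ∧
      ∑ i, Real.negMulLog (p i) ≤ 2 * Real.log (ξ.rank) := by
  obtain ⟨m, q, V, hq, hq1, hV, h⟩ := hru
  obtain ⟨ι, _, z, w, hz, hind, hw, hw1, hsum⟩ :=
    eq_pos_convex_span_of_mem_convexHull (mem_convexHull_of_randomUnitary hq hq1 hV h)
  choose v hv hzv using fun i => hz (Set.mem_range_self i)
  obtain rfl : z = fun i => vecMulVec (v i) (star (v i)) := funext hzv
  have hcard : Fintype.card ι ≤ ξ.rank ^ 2 :=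
    card_le_finrank_sq ξ.mulVecLin.range (mem_range_of_sum_vecMulVec hw hsum)
      (linearIndependent_of_affineIndependent ⟨0, hd⟩ (fun i => hv i _) hind)
  let e := (Fintype.equivFin ι).symm
  refine ⟨Fintype.card ι, w ∘ e, fun i => diagonal (v (e i)), fun i => (hw _).le,
    (e.sum_comp w).trans hw1, fun i => diagonal_mem_unitaryGroup (hv _), fun ρ => ?_, ?_⟩
  · refine Eq.trans ?_
      (e.sum_comp fun i => (w i : ℂ) • (diagonal (v i) * ρ * (diagonal (v i))ᴴ)).symm
    rw [← hsum]
    ext k l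
    simp only [hadamard_apply, Matrix.sum_apply, Matrix.smul_apply, diagonal_conjTranspose,
      mul_diagonal, diagonal_mul, vecMulVec_apply, Finset.sum_mul, Complex.real_smul, smul_eq_mul]
    exact Finset.sum_congr rfl fun i _ => by ring
  · have hne : Nonempty ι := by
      by_contra hne
      rw [not_nonempty_iff] at hne
      simp at hw1
    calc ∑ i, Real.negMulLog ((w ∘ e) i) = ∑ i, Real.negMulLog (w i) :=
          e.sum_comp fun i => Real.negMulLog (w i)
      _ ≤ Real.log (Fintype.card ι) := sum_negMulLog_le_log_card hw hw1
      _ ≤ Real.log ((ξ.rank : ℝ) ^ 2) :=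
          Real.log_le_log (by exact_mod_cast Fintype.card_pos) (by exact_mod_cast hcard)
      _ = 2 * Real.log ξ.rank := by rw [Real.log_pow]; norm_num
end

section
/- Let ξ be a 2×2 correlation matrix. Then there exists a random-unitary decomposition ξ ∘ ρ = Σ_i p_i U_i ρ U_i† (for all 2×2 matrices ρ, with U_i unitary 2×2 matrices and p a probability distribution) such that H(p) = S(ξ/2), i.e. the Shannon entropy Σ_i η(p_i) equals the von Neumann entropy Σ_j η(λ_j(ξ)/2) of ξ/2. In particular, for qubits the minimal classical information needed to invert the decoherence map equals S(ξ/2). -/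
open Matrix
open scoped ComplexOrder

/-!
A `2 × 2` correlation matrix is `ξ = [[1, c], [c̄, 1]]`, with eigenvalues satisfying `a + b = 2` and
`a b = 1 - |c|²`, so `|c|² = (a - 1)²` and `c = (a - 1) w` for some phase `w`. Take the probabilities
`a / 2`, `b / 2` and the diagonal unitaries `diag(1, w̄)`, `diag(1, -w̄)`. Conjugation by these fixes
the diagonal of `ρ` and multiplies its `(0, 1)` entry by `w` and `-w`; the weighted sum is
`(a - b) / 2 * w = (a - 1) w = c`. The two entropies then agree term by term.
-/

/-- A complex number whose squared modulus is `r ^ 2`, with `r` real of either sign, is `r` times a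
phase. -/
lemma exists_phase_of_normSq_eq_sq (c : ℂ) (r : ℝ) (h : c * star c = (r : ℂ) ^ 2) :
    ∃ w : ℂ, w * star w = 1 ∧ c = r * w := by
  by_cases hr : r = 0
  · refine ⟨1, by simp, ?_⟩
    subst hr
    simpa using h
  · have hr' : (r : ℂ) ≠ 0 := by exact_mod_cast hr
    refine ⟨c / r, ?_, by field_simp⟩
    have h1 : star (c / (r : ℂ)) = star c / r := by simp
    rw [h1, div_mul_div_comm, h]
    field_simp

/-- For any `2 × 2` correlation matrix `ξ`, there exists a
random-unitary decomposition `ξ ∘ ρ = Σ_i p_i U_i ρ U_i†` of the Schur multiplier whose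
Shannon entropy equals the von Neumann entropy of `ξ/2`: `H(p) = S(ξ/2)`. -/
theorem qubit_random_unitary_decomposition_with_entropy_eq_entropy_exchange
    (ξ : Matrix (Fin 2) (Fin 2) ℂ)
    (hpsd : ξ.PosSemidef) (hdiag : ∀ k, ξ k k = 1) :
    ∃ (m : ℕ) (p : Fin m → ℝ) (U : Fin m → Matrix (Fin 2) (Fin 2) ℂ),
      (∀ i, 0 ≤ p i) ∧ (∑ i, p i = 1) ∧
      (∀ i, U i ∈ Matrix.unitaryGroup (Fin 2) ℂ) ∧
      (∀ ρ : Matrix (Fin 2) (Fin 2) ℂ,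
        ξ ⊙ ρ = ∑ i, (p i : ℂ) • (U i * ρ * (U i)ᴴ)) ∧
      ∑ i, Real.negMulLog (p i) = ∑ j, Real.negMulLog (hpsd.1.eigenvalues j / 2) := by
  have hc : ξ 1 0 = star (ξ 0 1) := (hpsd.1.apply 1 0).symm
  have htr := hpsd.1.trace_eq_sum_eigenvalues
  have hdet := hpsd.1.det_eq_prod_eigenvalues
  have hnn := hpsd.eigenvalues_nonneg
  generalize hpsd.1.eigenvalues = e at *
  simp only [Matrix.trace_fin_two, hdiag, Fin.sum_univ_two] at htr
  simp only [Matrix.det_fin_two, hdiag, hc, Fin.prod_univ_two] at hdet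
  have hsumC : (e 0 : ℂ) + e 1 = 2 := by
    rw [show (2 : ℂ) = 1 + 1 by norm_num]
    exact htr.symm
  have hsum : e 0 + e 1 = 2 := by exact_mod_cast hsumC
  obtain ⟨w, hw, hcw⟩ := exists_phase_of_normSq_eq_sq (ξ 0 1) (e 0 - 1) (by
    push_cast
    have h2 : (e 1 : ℂ) = 2 - e 0 := by linear_combination hsumC
    have h3 : 1 * 1 - ξ 0 1 * star (ξ 0 1) = (e 0 : ℂ) * e 1 := hdet
    rw [h2] at h3
    linear_combination -h3)
  have hw' : star w * w = 1 := by rw [mul_comm]; exact hw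
  push_cast at hcw
  have hc' : ξ 1 0 = ((e 0 : ℂ) - 1) * star w := by
    rw [hc, hcw]
    simp
  refine ⟨2, fun i => e i / 2, ![diagonal ![1, star w], diagonal ![1, -star w]],
    fun i => div_nonneg (hnn i) (by norm_num), ?_, ?_, ?_, rfl⟩
  · rw [Fin.sum_univ_two]
    linarith
  · have hw2 : w * (starRingEnd ℂ) w = 1 := hw
    have hw3 : (starRingEnd ℂ) w * w = 1 := hw'
    intro i
    rw [Matrix.mem_unitaryGroup_iff]
    fin_cases i <;> ext j k <;> fin_cases j <;> fin_cases k <;>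
      simp [Matrix.star_eq_conjTranspose, Matrix.diagonal_conjTranspose, hw3]
  · intro ρ
    have hw3 : (starRingEnd ℂ) w * w = 1 := hw'
    have hc2 : ξ 1 0 = ((e 0 : ℂ) - 1) * (starRingEnd ℂ) w := hc'
    ext j k
    fin_cases j <;> fin_cases k <;>
      simp [Fin.sum_univ_two, Matrix.diagonal_conjTranspose, Matrix.mul_diagonal,
        Matrix.diagonal_mul, hdiag, hcw, hc2]
    · linear_combination (-ρ 0 0 / 2) * hsumC
    · linear_combination (w * ρ 0 1 / 2) * hsumC
    · linear_combination ((starRingEnd ℂ) w * ρ 1 0 / 2) * hsumC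
    · linear_combination (-ρ 1 1 / 2) * hsumC - (e 0 + e 1) / 2 * ρ 1 1 * hw3
end

section
/- Let d be a positive integer, let ω = exp(2πi/d), let Z_j (j = 1, …, d) be the diagonal unitary with (Z_j)_{kk} = ω^{kj}, and for a d×d matrix ρ define the matrix M_j with entries (M_j)_{kl} = (1/d) ω^{j(l−k)} ρ_{kl} (the unnormalized conditional state of the system given outcome j of the Fourier-conjugate measurement {|ẽ_j⟩⟨ẽ_j|} on the probe, where ẽ_j = (1/√d) Σ_k ω^{jk} |k⟩). Then for every j: Z_j M_j Z_j† = ρ/d. In particular, conditionally on each probe outcome j, applying the unitary Z_j recovers the arbitrary initial state ρ exactly (with outcome probability 1/d): any von Neumann measurement in a basis can be erased by the Fourier-complementary measurement on the environment. -/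
/-!
Conjugation by a diagonal matrix multiplies the `(k, l)` entry by the `k`-th diagonal entry and the
conjugate of the `l`-th one. Since `ω` has modulus one, `conj ω = ω⁻¹`, so the phases on the
`(k, l)` entry combine to `ω ^ ((k+1)(j+1) + (j+1)(l-k) - (l+1)(j+1)) = 1`, which leaves `ρ k l / d`.
-/

open Matrix

/-- Quantum eraser in dimension `d`: with `ω = e^{2πi/d}`,
`Z_j = diag(ω^{kj})` and `M_j` the unnormalized conditional state with entries
`(M_j)_{kl} = (1/d) ω^{j(l−k)} ρ_{kl}` obtained from outcome `j` of the
Fourier-conjugate measurement on the probe, one has `Z_j M_j Z_j† = ρ/d` for every `j`: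
conditionally on each probe outcome, applying `Z_j` recovers the arbitrary initial
state `ρ` exactly (with outcome probability `1/d`). -/
theorem quantum_eraser_correction
    (d : ℕ) (hd : 0 < d) (ω : ℂ) (hω : ω = Complex.exp (2 * Real.pi * Complex.I / d))
    (ρ : Matrix (Fin d) (Fin d) ℂ)
    (Z : Fin d → Matrix (Fin d) (Fin d) ℂ)
    (hZ : ∀ j, Z j = Matrix.diagonal (fun k =>
      ω ^ (((k.1 : ℕ) + 1) * ((j.1 : ℕ) + 1))))
    (M : Fin d → Matrix (Fin d) (Fin d) ℂ)
    (hM : ∀ j, M j = Matrix.of (fun k l =>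
      (1 / d : ℂ) * ω ^ ((((j.1 : ℕ) + 1 : ℤ)) * (((l.1 : ℕ) : ℤ) - ((k.1 : ℕ) : ℤ)))
        * ρ k l)) :
    ∀ j, Z j * M j * (Z j)ᴴ = (1 / d : ℂ) • ρ := by
  have hω0 : ω ≠ 0 := hω ▸ Complex.exp_ne_zero _
  -- `ω` is the exponential of a purely imaginary number, so conjugation inverts it.
  have hstar : star ω = ω⁻¹ := by
    rw [hω, ← Complex.exp_neg, Complex.star_def, ← Complex.exp_conj]
    congr 1
    simp [neg_div, Complex.conj_ofNat]
  intro j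
  ext k l
  rw [hZ, hM, Matrix.diagonal_conjTranspose, Matrix.mul_diagonal, Matrix.diagonal_mul]
  simp only [Matrix.of_apply, Pi.star_apply, star_pow, hstar, Matrix.smul_apply, smul_eq_mul]
  -- The exponents `(k+1)(j+1)`, `(j+1)(l-k)` and `-(l+1)(j+1)` sum to zero.
  have key : ω ^ ((k.1 + 1) * (j.1 + 1)) * ω ^ (((j.1 : ℤ) + 1) * ((l.1 : ℤ) - (k.1 : ℤ)))
      * ω⁻¹ ^ ((l.1 + 1) * (j.1 + 1)) = 1 := by
    rw [inv_pow, ← zpow_natCast, ← zpow_natCast, ← _root_.zpow_neg, ← zpow_add₀ hω0,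
      ← zpow_add₀ hω0, ← zpow_zero ω]
    congr 1
    push_cast
    ring
  linear_combination ((1 / d : ℂ) * ρ k l) * key
end
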